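/- A Banach space X is Grothendieck if and only if its dual X* is weakly sequentially complete and X has no quotient isomorphic to c₀. -/

import Mathlib

open Filter Topology ZeroAtInfty

/-- A sequence in the dual of `X` converges in the weak* topology. -/
def WeakStarConv (X : Type*) [SeminormedAddCommGroup X] [NormedSpace ℝ X]
    (f : ℕ → X →L[ℝ] ℝ) (g : X →L[ℝ] ℝ) : Prop :=
  ∀ x : X, Tendsto (fun n => f n x) atTop (𝓝 (g x))

/-- A sequence in a normed space `Z` converges in the weak topology. -/
def WeakConv (Z : Type*) [SeminormedAddCommGroup Z] [NormedSpace ℝ Z]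
    (f : ℕ → Z) (g : Z) : Prop :=
  ∀ φ : Z →L[ℝ] ℝ, Tendsto (fun n => φ (f n)) atTop (𝓝 (φ g))

/-- A Banach space is Grothendieck if weak*-convergent sequences in its dual converge weakly. -/
def IsGrothendieck (X : Type*) [SeminormedAddCommGroup X] [NormedSpace ℝ X] : Prop :=
  ∀ (f : ℕ → X →L[ℝ] ℝ) (g : X →L[ℝ] ℝ),
    WeakStarConv X f g → WeakConv (X →L[ℝ] ℝ) f g

/-- The weak topology of a normed space. -/
def weakTopology (Y : Type*) [SeminormedAddCommGroup Y] [NormedSpace ℝ Y] :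
    TopologicalSpace Y :=
  TopologicalSpace.induced (fun (y : Y) => fun f : Y →L[ℝ] ℝ => f y) Pi.topologicalSpace

/-- An operator is weakly compact if the image of the closed unit ball is
relatively compact in the weak topology. -/
def IsWeaklyCompactOp {X Y : Type*} [SeminormedAddCommGroup X] [NormedSpace ℝ X]
    [SeminormedAddCommGroup Y] [NormedSpace ℝ Y] (T : X →L[ℝ] Y) : Prop :=
  @IsCompact Y (weakTopology Y) (@closure Y (weakTopology Y) (⇑T '' Metric.closedBall 0 1))

/-- A sequence in `Z` is weakly Cauchy if its image under every functional converges. -/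
def WeaklyCauchy (Z : Type*) [SeminormedAddCommGroup Z] [NormedSpace ℝ Z]
    (f : ℕ → Z) : Prop :=
  ∀ φ : Z →L[ℝ] ℝ, ∃ l : ℝ, Tendsto (fun n => φ (f n)) atTop (𝓝 l)

/-- `X` has a quotient isomorphic to `c₀`. -/
def HasQuotientC0 (X : Type*) [SeminormedAddCommGroup X] [NormedSpace ℝ X] : Prop :=
  ∃ M : Submodule ℝ X, IsClosed (M : Set X) ∧ Nonempty ((X ⧸ M) ≃L[ℝ] C₀(ℕ, ℝ))

/-- A normed space is weakly sequentially complete if every weakly Cauchy sequence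
converges weakly. -/
def WeaklySeqComplete (Z : Type*) [SeminormedAddCommGroup Z] [NormedSpace ℝ Z] : Prop :=
  ∀ f : ℕ → Z, WeaklyCauchy Z f → ∃ g : Z, WeakConv Z f g

lemma Set.Infinite.inter_of_sdiff_finite {β : Type*} {L L' E : Set β}
    (hE : (L' ∩ E).Infinite) (hfin : (L' \ L).Finite) : (L ∩ E).Infinite := fun hLE =>
  hE ((hLE.union hfin).subset fun x hx => by
    by_cases hxL : x ∈ L
    · exact Or.inl ⟨hxL, hx.2⟩
    · exact Or.inr ⟨hx.1, hxL⟩)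

/-- A countable family of almost-hereditary properties of infinite subsets of `ℕ`, each of which
can be achieved inside any infinite subset of `M`, can be achieved simultaneously. -/
lemma exists_infinite_subset_forall {ι : Type*} [Countable ι] {P : ι → Set ℕ → Prop}
    (hP : ∀ i L L', (L' \ L).Finite → P i L → P i L') {M : Set ℕ} (hM : M.Infinite)
    (h : ∀ i, ∀ L ⊆ M, L.Infinite → ∃ L' ⊆ L, L'.Infinite ∧ P i L') :
    ∃ L ⊆ M, L.Infinite ∧ ∀ i, P i L := by
  rcases isEmpty_or_nonempty ι with _ | _
  · exact ⟨M, subset_rfl, hM, isEmptyElim⟩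
  obtain ⟨e, he⟩ := exists_surjective_nat ι
  choose! next hsub hinf hnext using h
  let D : ℕ → Set ℕ := fun k => Nat.rec M (fun k L => next (e k) L) k
  have hD : ∀ k, D k ⊆ M ∧ (D k).Infinite := by
    intro k
    induction k with
    | zero => exact ⟨subset_rfl, hM⟩
    | succ k ih => exact ⟨(hsub _ _ ih.1 ih.2).trans ih.1, hinf _ _ ih.1 ih.2⟩
  have hanti : Antitone D := antitone_nat_of_succ_le fun k => hsub _ _ (hD k).1 (hD k).2
  obtain ⟨n, hn, hnD⟩ := Filter.extraction_forall_of_frequently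
    fun k => Nat.frequently_atTop_iff_infinite.2 (hD k).2
  refine ⟨Set.range n, ?_, Set.infinite_range_of_injective hn.injective, fun i => ?_⟩
  · rintro _ ⟨k, rfl⟩
    exact (hD k).1 (hnD k)
  obtain ⟨k, rfl⟩ := he i
  refine hP _ (D (k + 1)) _ ?_ (hnext _ _ (hD k).1 (hD k).2)
  refine ((Set.finite_Iic k).image n).subset ?_
  rintro _ ⟨⟨j, rfl⟩, hj⟩
  refine ⟨j, ?_, rfl⟩
  by_contra hjk
  exact hj (hanti (Nat.succ_le_of_lt (not_le.1 hjk)) (hnD j))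

/-- Along every infinite subset of `M`, some point of `T` lies in infinitely many of the sets
`A n` and in infinitely many of the sets `B n`. -/
def Oscillates {α : Type*} (A B : ℕ → Set α) (T : Set α) (M : Set ℕ) : Prop :=
  ∀ L ⊆ M, L.Infinite →
    ∃ s ∈ T, (L ∩ {n | s ∈ A n}).Infinite ∧ (L ∩ {n | s ∈ B n}).Infinite

lemma Oscillates.mono {α : Type*} {A B : ℕ → Set α} {T : Set α} {M M' : Set ℕ}
    (h : Oscillates A B T M) (hM : M' ⊆ M) : Oscillates A B T M' :=
  fun L hL => h L (hL.trans hM)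

/-- The sets of a finite oscillating family can be simultaneously split by a single pair
`A n`, `B n`, with both halves still oscillating along a common infinite set. -/
lemma exists_split_oscillates {α : Type*} {A B : ℕ → Set α} {𝒯 : Set (Set α)} (h𝒯 : 𝒯.Finite)
    {M : Set ℕ} (hM : M.Infinite) (h : ∀ T ∈ 𝒯, Oscillates A B T M) :
    ∃ n ∈ M, ∃ M' ⊆ M, M'.Infinite ∧
      ∀ T ∈ 𝒯, Oscillates A B (T ∩ A n) M' ∧ Oscillates A B (T ∩ B n) M' := by
  by_contra! hcon
  have : Finite 𝒯 := h𝒯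
  let C : Bool → ℕ → Set α := fun b => cond b A B
  let Q : 𝒯 × Bool → ℕ → Set ℕ → Prop := fun p n L =>
    ∀ s ∈ (p.1 : Set α) ∩ C p.2 n,
      ¬ ((L ∩ {n | s ∈ A n}).Infinite ∧ (L ∩ {n | s ∈ B n}).Infinite)
  have hmono : ∀ p n L L', (L' \ L).Finite → Q p n L → Q p n L' := by
    intro p n L L' hfin hQ s hs hinf
    exact hQ s hs ⟨hinf.1.inter_of_sdiff_finite hfin, hinf.2.inter_of_sdiff_finite hfin⟩
  obtain ⟨L, hLM, hL, hLQ⟩ := exists_infinite_subset_forall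
    (P := fun (n : M) L => ∃ p, Q p n L)
    (fun n L L' hfin ⟨p, hp⟩ => ⟨p, hmono p n L L' hfin hp⟩) hM (by
      rintro ⟨n, hn⟩ L hLM hL
      obtain ⟨T, hT, hTn⟩ := hcon n hn L hLM hL
      have : ∃ b, ¬ Oscillates A B (T ∩ C b n) L := by
        by_cases hA : Oscillates A B (T ∩ A n) L
        · exact ⟨false, hTn hA⟩
        · exact ⟨true, hA⟩
      obtain ⟨b, hb⟩ := this
      unfold Oscillates at hb
      push Not at hb
      obtain ⟨L', hL', hinf, hs⟩ := hb
      exact ⟨L', hL', hinf, (⟨T, hT⟩, b), fun s hsT hh => hh.2 (hs s hsT hh.1)⟩)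
  have hLQ' : ∀ n ∈ L, ∃ p, Q p n L := fun n hn => hLQ ⟨n, hLM hn⟩
  obtain ⟨n₀, hn₀⟩ := hL.nonempty
  have : Nonempty (𝒯 × Bool) := ⟨(hLQ' n₀ hn₀).choose⟩
  choose! p hp using hLQ'
  obtain ⟨q, hq⟩ : ∃ q, (L ∩ p ⁻¹' {q}).Infinite := by
    by_contra! hfin
    refine hL ((Set.finite_iUnion hfin).subset fun n hn => Set.mem_iUnion.2 ⟨p n, hn, rfl⟩)
  obtain ⟨s, hsT, hsA, hsB⟩ := h q.1 q.1.2 _ (Set.inter_subset_left.trans hLM) hq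
  have hsC : ((L ∩ p ⁻¹' {q}) ∩ {n | s ∈ C q.2 n}).Infinite := by
    cases q.2 <;> assumption
  obtain ⟨n, ⟨hnL, hnq⟩, hns⟩ := hsC.nonempty
  have hQ := hp n hnL
  rw [show p n = q from hnq] at hQ
  exact hQ s ⟨hsT, hns⟩
    ⟨hsA.mono (by gcongr; exact Set.inter_subset_left),
      hsB.mono (by gcongr; exact Set.inter_subset_left)⟩

/-- An oscillating sequence of pairs of sets has a Boolean independent subsequence. -/
lemma Oscillates.exists_independent {α : Type*} {A B : ℕ → Set α} {T : Set α} {M : Set ℕ}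
    (hM : M.Infinite) (h : Oscillates A B T M) :
    ∃ n : ℕ → ℕ, StrictMono n ∧ ∀ (σ : ℕ → Prop) (N : ℕ),
      ∃ s ∈ T, ∀ i < N, (σ i → s ∈ A (n i)) ∧ (¬ σ i → s ∈ B (n i)) := by
  let State := {p : Set (Set α) × Set ℕ //
    p.1.Finite ∧ p.2.Infinite ∧ ∀ T ∈ p.1, Oscillates A B T p.2}
  have step : ∀ p : State, ∃ (n : ℕ) (p' : State), n ∈ p.1.2 ∧ p'.1.2 ⊆ p.1.2 ∩ Set.Ioi n ∧
      ∀ T ∈ p.1.1, T ∩ A n ∈ p'.1.1 ∧ T ∩ B n ∈ p'.1.1 := by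
    rintro ⟨⟨𝒯, M⟩, h𝒯, hM, h⟩
    obtain ⟨n, hn, M', hM', hinf, hosc⟩ := exists_split_oscillates h𝒯 hM h
    refine ⟨n, ⟨⟨(· ∩ A n) '' 𝒯 ∪ (· ∩ B n) '' 𝒯, M' ∩ Set.Ioi n⟩,
      (h𝒯.image _).union (h𝒯.image _), ?_, ?_⟩, hn, ?_, ?_⟩
    · rw [← Set.compl_Iic, ← Set.sdiff_eq]
      exact hinf.sdiff (Set.finite_Iic n)
    · rintro _ (⟨T, hT, rfl⟩ | ⟨T, hT, rfl⟩)
      · exact (hosc T hT).1.mono Set.inter_subset_left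
      · exact (hosc T hT).2.mono Set.inter_subset_left
    · exact Set.inter_subset_inter_left _ hM'
    · exact fun T hT => ⟨Or.inl ⟨T, hT, rfl⟩, Or.inr ⟨T, hT, rfl⟩⟩
  choose n next hn hnext hsplit using step
  let p₀ : State := ⟨⟨{T}, M⟩, Set.finite_singleton T, hM, by simpa using h⟩
  let p : ℕ → State := fun k => next^[k] p₀
  have hp : ∀ k, p (k + 1) = next (p k) := fun k => Function.iterate_succ_apply' next k p₀
  refine ⟨fun k => n (p k), strictMono_nat_of_lt_succ fun k => ?_, fun σ N => ?_⟩
  · have hsub := hnext (p k)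
    rw [← hp] at hsub
    exact (hsub (hn (p (k + 1)))).2
  · suffices ∃ E ∈ (p N).1.1, E ⊆ T ∧ ∀ s ∈ E, ∀ i < N,
        (σ i → s ∈ A (n (p i))) ∧ (¬ σ i → s ∈ B (n (p i))) by
      obtain ⟨E, hE, hET, hs⟩ := this
      obtain ⟨s, hsE, -⟩ := (p N).2.2.2 E hE _ subset_rfl (p N).2.2.1
      exact ⟨s, hET hsE, hs s hsE⟩
    induction N with
    | zero => exact ⟨T, rfl, subset_rfl, by simp⟩
    | succ N ih =>
      obtain ⟨E, hE, hET, hs⟩ := ih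
      rw [hp]
      by_cases hσ : σ N
      · refine ⟨_, (hsplit _ E hE).1, Set.inter_subset_left.trans hET, fun s hsE i hi => ?_⟩
        rcases Nat.lt_succ_iff_lt_or_eq.1 hi with hi | rfl
        · exact hs s hsE.1 i hi
        · exact ⟨fun _ => hsE.2, fun hh => absurd hσ hh⟩
      · refine ⟨_, (hsplit _ E hE).2, Set.inter_subset_left.trans hET, fun s hsE i hi => ?_⟩
        rcases Nat.lt_succ_iff_lt_or_eq.1 hi with hi | rfl
        · exact hs s hsE.1 i hi
        · exact ⟨fun hh => absurd hh hσ, fun _ => hsE.2⟩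

/-- Rosenthal's `ℓ¹` theorem: a bounded sequence without weakly Cauchy subsequences has a
subsequence equivalent to the unit vector basis of `ℓ¹`. -/
theorem exists_l1_subsequence {Z : Type*} [SeminormedAddCommGroup Z] [NormedSpace ℝ Z]
    {f : ℕ → Z} {K : ℝ} (hK : ∀ n, ‖f n‖ ≤ K)
    (hf : ∀ θ : ℕ → ℕ, StrictMono θ → ¬ WeaklyCauchy Z (f ∘ θ)) :
    ∃ θ : ℕ → ℕ, StrictMono θ ∧ ∃ δ > 0, ∀ (a : ℕ → ℝ) (N : ℕ),
      δ * ∑ i ∈ Finset.range N, |a i| ≤ ‖∑ i ∈ Finset.range N, a i • f (θ i)‖ := by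
  let T : Set (Z →L[ℝ] ℝ) := {φ | ‖φ‖ ≤ 1}
  have hosc : ∃ p q : ℚ, p < q ∧ ∃ M : Set ℕ, M.Infinite ∧
      Oscillates (fun n => {φ : Z →L[ℝ] ℝ | (q : ℝ) < φ (f n)}) (fun n => {φ | φ (f n) < p})
        T M := by
    by_contra! hcon
    obtain ⟨L, -, hL, hLP⟩ := exists_infinite_subset_forall (ι := {x : ℚ × ℚ // x.1 < x.2})
      (P := fun x L => ∀ φ ∈ T, ¬ ((L ∩ {n | (x.1.2 : ℝ) < φ (f n)}).Infinite ∧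
        (L ∩ {n | φ (f n) < x.1.1}).Infinite))
      (fun x L L' hfin hP φ hφ hinf =>
        hP φ hφ ⟨hinf.1.inter_of_sdiff_finite hfin, hinf.2.inter_of_sdiff_finite hfin⟩)
      Set.infinite_univ (fun ⟨⟨p, q⟩, hpq⟩ L _ hL => by
        have := hcon p q hpq L hL
        unfold Oscillates at this
        push Not at this
        obtain ⟨L', hL', hinf, hs⟩ := this
        exact ⟨L', hL', hinf, fun φ hφ hh => hh.2 (hs φ hφ hh.1)⟩)
    have hθ : StrictMono (Nat.nth (· ∈ L)) := Nat.nth_strictMono hL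
    have hθL : ∀ n, Nat.nth (· ∈ L) n ∈ L := fun n => Nat.nth_mem_of_infinite hL n
    have hball : ∀ φ ∈ T, ∃ l, Tendsto (fun n => φ (f (Nat.nth (· ∈ L) n))) atTop (𝓝 l) := by
      intro φ hφ
      have hbd : ∀ n, |φ (f n)| ≤ K := fun n =>
        ((φ.le_opNorm (f n)).trans (mul_le_of_le_one_left (norm_nonneg _) hφ)).trans (hK n)
      refine tendsto_of_no_upcrossings (Rat.denseRange_cast (𝕜 := ℝ)) ?_
        (isBoundedUnder_of ⟨K, fun n => (abs_le.1 (hbd _)).2⟩)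
        (isBoundedUnder_of ⟨-K, fun n => (abs_le.1 (hbd _)).1⟩)
      rintro _ ⟨p, rfl⟩ _ ⟨q, rfl⟩ hpq ⟨h₁, h₂⟩
      have key : ∀ E : ℕ → Prop, (∃ᶠ n in atTop, E (Nat.nth (· ∈ L) n)) →
          (L ∩ {n | E n}).Infinite := fun E hE =>
        ((Nat.frequently_atTop_iff_infinite.1 hE).image hθ.injective.injOn).mono (by
          rintro _ ⟨n, hn, rfl⟩
          exact ⟨hθL n, hn⟩)
      exact hLP ⟨(p, q), by exact_mod_cast hpq⟩ φ hφ
        ⟨key (fun n => (q : ℝ) < φ (f n)) h₂, key (fun n => φ (f n) < p) h₁⟩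
    refine hf _ hθ fun φ => ?_
    have hpos : 0 < ‖φ‖ + 1 := by positivity
    obtain ⟨l, hl⟩ := hball ((‖φ‖ + 1)⁻¹ • φ) (by
      change ‖_‖ ≤ 1
      rw [norm_smul, norm_inv, Real.norm_of_nonneg hpos.le, inv_mul_le_iff₀ hpos]
      linarith)
    refine ⟨(‖φ‖ + 1) * l, (hl.const_mul (‖φ‖ + 1)).congr fun n => ?_⟩
    simp [mul_inv_cancel_left₀ hpos.ne']
  obtain ⟨p, q, hpq, M, hM, hosc⟩ := hosc
  obtain ⟨θ, hθ, hind⟩ := hosc.exists_independent hM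
  have hpq' : (p : ℝ) < q := by exact_mod_cast hpq
  refine ⟨θ, hθ, (q - p) / 2, by linarith, fun a N => ?_⟩
  obtain ⟨s, hsT, hs⟩ := hind (fun i => 0 ≤ a i) N
  obtain ⟨t, htT, ht⟩ := hind (fun i => ¬ 0 ≤ a i) N
  have hbound : ∀ φ ∈ T, ∀ z : Z, |φ z| ≤ ‖z‖ := fun φ hφ z =>
    (φ.le_opNorm z).trans (mul_le_of_le_one_left (norm_nonneg _) hφ)
  set z := ∑ i ∈ Finset.range N, a i • f (θ i) with hz
  have hlow : (q - p) * ∑ i ∈ Finset.range N, |a i| ≤ s z - t z := by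
    rw [hz, map_sum, map_sum, ← Finset.sum_sub_distrib, Finset.mul_sum]
    refine Finset.sum_le_sum fun i hi => ?_
    have hi := Finset.mem_range.1 hi
    have hsi := hs i hi
    have hti := ht i hi
    simp only [Set.mem_ofPred_eq] at hsi hti
    simp only [map_smul, smul_eq_mul]
    by_cases h0 : 0 ≤ a i
    · rw [abs_of_nonneg h0]
      nlinarith [hsi.1 h0, hti.2 (not_not.2 h0)]
    · rw [abs_of_neg (not_le.1 h0)]
      nlinarith [hsi.2 h0, hti.1 h0]
  have h1 := (abs_le.1 (hbound s hsT z)).2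
  have h2 := (abs_le.1 (hbound t htT z)).1
  linarith

/-- A bounded operator on a Banach space with controlled approximate preimages is onto. -/
lemma surjective_of_approx_preimage {X Y : Type*} [NormedAddCommGroup X] [NormedSpace ℝ X]
    [CompleteSpace X] [NormedAddCommGroup Y] [NormedSpace ℝ Y] (T : X →L[ℝ] Y) {C : ℝ}
    (hT : ∀ y, ∃ x, ‖y - T x‖ ≤ 1 / 2 * ‖y‖ ∧ ‖x‖ ≤ C * ‖y‖) : Function.Surjective T := by
  intro y
  choose g hg hgC using hT
  let h : Y → Y := fun y => y - T (g y)
  have hpow : ∀ n : ℕ, ‖h^[n] y‖ ≤ (1 / 2) ^ n * ‖y‖ := by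
    intro n
    induction n with
    | zero => simp
    | succ n ih =>
      rw [Function.iterate_succ_apply', pow_succ', mul_assoc]
      exact (hg _).trans (by gcongr)
  have hgeom : Summable fun n : ℕ => (1 / 2 : ℝ) ^ n :=
    summable_geometric_of_lt_one (by norm_num) (by norm_num)
  have hsum : Summable fun n => g (h^[n] y) := by
    refine .of_norm_bounded (hgeom.mul_right (|C| * ‖y‖)) fun n => ?_
    calc ‖g (h^[n] y)‖ ≤ C * ‖h^[n] y‖ := hgC _
      _ ≤ |C| * ((1 / 2) ^ n * ‖y‖) := by gcongr; exacts [le_abs_self C, hpow n]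
      _ = (1 / 2) ^ n * (|C| * ‖y‖) := by ring
  have hpart : ∀ n : ℕ, T (∑ i ∈ Finset.range n, g (h^[i] y)) = y - h^[n] y := by
    intro n
    induction n with
    | zero => simp
    | succ n ih => rw [Finset.sum_range_succ, map_add, ih, Function.iterate_succ_apply', sub_add]
  have hlim : Tendsto (fun n => h^[n] y) atTop (𝓝 0) :=
    squeeze_zero_norm hpow (by simpa using hgeom.tendsto_atTop_zero.mul_const ‖y‖)
  refine ⟨∑' n, g (h^[n] y), tendsto_nhds_unique
    ((T.continuous.tendsto _).comp hsum.hasSum.tendsto_sum_nat) ?_⟩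
  simpa [Function.comp_def, hpart] using hlim.const_sub y

/-- The element of `c₀` given by a null sequence. -/
def c0OfTendsto (u : ℕ → ℝ) (hu : Tendsto u atTop (𝓝 0)) : C₀(ℕ, ℝ) where
  toFun := u
  continuous_toFun := continuous_of_discreteTopology
  zero_at_infty' := by rwa [Filter.cocompact_eq_cofinite, Nat.cofinite_eq_atTop]

@[simp]
lemma c0OfTendsto_apply (u : ℕ → ℝ) (hu : Tendsto u atTop (𝓝 0)) (n : ℕ) :
    c0OfTendsto u hu n = u n := rfl

lemma c0_tendsto (z : C₀(ℕ, ℝ)) : Tendsto z atTop (𝓝 0) := by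
  have := z.zero_at_infty'
  rwa [Filter.cocompact_eq_cofinite, Nat.cofinite_eq_atTop] at this

lemma c0_abs_apply_le (z : C₀(ℕ, ℝ)) (n : ℕ) : |z n| ≤ ‖z‖ :=
  z.toBCF.norm_coe_le_norm n

lemma c0_norm_le {z : C₀(ℕ, ℝ)} {C : ℝ} (hC : 0 ≤ C) (h : ∀ n, |z n| ≤ C) : ‖z‖ ≤ C :=
  (BoundedContinuousFunction.norm_le hC).2 h

/-- The finitely supported sequence which agrees with `u` on `{0, …, N - 1}`. -/
def c0Truncate (u : ℕ → ℝ) (N : ℕ) : C₀(ℕ, ℝ) :=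
  c0OfTendsto (fun n => if n < N then u n else 0)
    (tendsto_const_nhds.congr' (by
      filter_upwards [eventually_ge_atTop N] with n hn
      simp [not_lt.2 hn]))

@[simp]
lemma c0Truncate_apply (u : ℕ → ℝ) (N n : ℕ) :
    c0Truncate u N n = if n < N then u n else 0 := rfl

/-- The unit vectors of `c₀`. -/
def c0Basis (i : ℕ) : C₀(ℕ, ℝ) := c0Truncate (fun n => if n = i then 1 else 0) (i + 1)

lemma c0Basis_apply (i n : ℕ) : c0Basis i n = if n = i then 1 else 0 := by
  rw [c0Basis, c0Truncate_apply]
  split_ifs <;> first | rfl | omega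

lemma c0Truncate_eq_sum (u : ℕ → ℝ) (N : ℕ) :
    c0Truncate u N = ∑ i ∈ Finset.range N, u i • c0Basis i := by
  induction N with
  | zero => ext n; simp
  | succ N ih =>
    rw [Finset.sum_range_succ, ← ih]
    ext n
    simp only [ZeroAtInftyContinuousMap.add_apply, ZeroAtInftyContinuousMap.smul_apply,
      c0Truncate_apply, c0Basis_apply, smul_eq_mul]
    rcases lt_trichotomy n N with h | rfl | h
    · simp [h, h.ne, h.trans (Nat.lt_succ_self N)]
    · simp
    · simp [h.ne', not_lt.2 h.le, not_lt.2 (Nat.succ_le_of_lt h)]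

lemma tendsto_c0Truncate (z : C₀(ℕ, ℝ)) :
    Tendsto (fun N => c0Truncate z N) atTop (𝓝 z) := by
  rw [Metric.tendsto_atTop]
  intro ε hε
  obtain ⟨N, hN⟩ := Metric.tendsto_atTop.1 (c0_tendsto z) (ε / 2) (by positivity)
  refine ⟨N, fun M hM => ?_⟩
  rw [dist_eq_norm]
  refine (c0_norm_le (by positivity) fun n => ?_).trans_lt (half_lt_self hε)
  rw [ZeroAtInftyContinuousMap.sub_apply, c0Truncate_apply]
  split_ifs with hn
  · simpa using (half_pos hε).le
  · simpa using (hN n (by omega)).le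

/-- A functional on `c₀` is given by pairing with its values at the unit vectors. -/
lemma c0_tendsto_sum (ψ : C₀(ℕ, ℝ) →L[ℝ] ℝ) (z : C₀(ℕ, ℝ)) :
    Tendsto (fun N => ∑ i ∈ Finset.range N, z i * ψ (c0Basis i)) atTop (𝓝 (ψ z)) := by
  refine ((ψ.continuous.tendsto z).comp (tendsto_c0Truncate z)).congr fun N => ?_
  simp [c0Truncate_eq_sum, map_sum]

lemma c0_sum_abs_le (ψ : C₀(ℕ, ℝ) →L[ℝ] ℝ) (N : ℕ) :
    ∑ i ∈ Finset.range N, |ψ (c0Basis i)| ≤ ‖ψ‖ := by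
  set σ : ℕ → ℝ := fun i => SignType.sign (ψ (c0Basis i)) with hσ
  have hnorm : ‖c0Truncate σ N‖ ≤ 1 := by
    refine c0_norm_le zero_le_one fun n => ?_
    rw [c0Truncate_apply]
    split_ifs
    · rcases lt_trichotomy (ψ (c0Basis n)) 0 with h | h | h <;> simp [hσ, h]
    · simp
  calc ∑ i ∈ Finset.range N, |ψ (c0Basis i)| = ψ (c0Truncate σ N) := by
        rw [c0Truncate_eq_sum, map_sum]
        refine Finset.sum_congr rfl fun i _ => ?_
        simp [hσ, sign_mul_self]
    _ ≤ ‖ψ‖ := (le_abs_self _).trans (ψ.unit_le_opNorm _ hnorm)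

/-- The operator into `c₀` whose coordinates form a given weak* null sequence. -/
noncomputable def c0Operator {X : Type*} [NormedAddCommGroup X] [NormedSpace ℝ X]
    (f : ℕ → X →L[ℝ] ℝ) {K : ℝ} (hK : ∀ n, ‖f n‖ ≤ K) (hf : WeakStarConv X f 0) :
    X →L[ℝ] C₀(ℕ, ℝ) :=
  LinearMap.mkContinuous
    { toFun := fun x => c0OfTendsto (fun n => f n x) (hf x)
      map_add' := fun x y => by ext n; simp
      map_smul' := fun c x => by ext n; simp } K fun x =>
    c0_norm_le (mul_nonneg ((norm_nonneg _).trans (hK 0)) (norm_nonneg x))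
      fun n => (f n).le_of_opNorm_le (hK n) x

@[simp]
lemma c0Operator_apply {X : Type*} [NormedAddCommGroup X] [NormedSpace ℝ X]
    (f : ℕ → X →L[ℝ] ℝ) {K : ℝ} (hK : ∀ n, ‖f n‖ ≤ K) (hf : WeakStarConv X f 0) (x : X)
    (n : ℕ) : c0Operator f hK hf x n = f n x := rfl

/-- If a weak* null sequence dominates the unit vector basis of `ℓ¹`, then the operator into
`c₀` which it induces is onto. -/
lemma c0Operator_surjective {X : Type*} [NormedAddCommGroup X] [NormedSpace ℝ X]
    [CompleteSpace X] {f : ℕ → X →L[ℝ] ℝ} {K : ℝ} (hK : ∀ n, ‖f n‖ ≤ K)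
    (hf : WeakStarConv X f 0) {δ : ℝ} (hδ : 0 < δ)
    (hl1 : ∀ (a : ℕ → ℝ) (N : ℕ),
      δ * ∑ i ∈ Finset.range N, |a i| ≤ ‖∑ i ∈ Finset.range N, a i • f i‖) :
    Function.Surjective (c0Operator f hK hf) := by
  set T := c0Operator f hK hf with hT
  refine surjective_of_approx_preimage T (C := δ⁻¹) fun y => ?_
  rcases eq_or_ne y 0 with rfl | hy
  · exact ⟨0, by simp⟩
  have hy' : 0 < ‖y‖ := norm_pos_iff.2 hy
  set r := δ⁻¹ * ‖y‖ with hr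
  have hr0 : 0 < r := by positivity
  suffices hmem : y ∈ closure (T '' Metric.closedBall 0 r) by
    obtain ⟨_, ⟨x, hx, rfl⟩, hxy⟩ := Metric.mem_closure_iff.1 hmem (1 / 2 * ‖y‖) (by positivity)
    exact ⟨x, by rw [← dist_eq_norm]; exact hxy.le, by simpa using hx⟩
  by_contra hmem
  obtain ⟨ψ, u, hψu, huy⟩ := geometric_hahn_banach_closed_point
    (((convex_closedBall (0 : X) r).linear_image T.toLinearMap).closure) isClosed_closure hmem
  have hball : ∀ x, ‖x‖ ≤ r → ψ (T x) < u := fun x hx =>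
    hψu _ (subset_closure ⟨x, by simpa using hx, rfl⟩)
  set a : ℕ → ℝ := fun i => ψ (c0Basis i) with ha
  have hasum : Summable fun i => |a i| :=
    summable_of_sum_range_le (fun _ => abs_nonneg _) (c0_sum_abs_le ψ)
  have hsum : Summable fun i => a i • f i := by
    refine .of_norm_bounded (hasum.mul_right K) fun i => ?_
    rw [norm_smul, Real.norm_eq_abs]
    gcongr
    exact hK i
  have hG : ∑' i, a i • f i = ψ.comp T := by
    ext x
    refine tendsto_nhds_unique
      (((ContinuousLinearMap.apply ℝ ℝ x).continuous.tendsto _).comp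
        hsum.hasSum.tendsto_sum_nat) ((c0_tendsto_sum ψ (T x)).congr fun N => ?_)
    simp [hT, ha, mul_comm]
  have hlow : δ * ∑' i, |a i| ≤ ‖ψ.comp T‖ := by
    rw [← hG]
    exact le_of_tendsto_of_tendsto' (hasum.hasSum.tendsto_sum_nat.const_mul δ)
      hsum.hasSum.tendsto_sum_nat.norm (hl1 a)
  have hu0 : 0 < u := by simpa using hball 0 (by simpa using hr0.le)
  have hup : ‖ψ.comp T‖ ≤ u / r := by
    refine ContinuousLinearMap.opNorm_le_of_unit_norm (by positivity) fun x hx => ?_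
    have h1 := hball (r • x) (by simp [norm_smul, hx, abs_of_pos hr0])
    have h2 := hball (-(r • x)) (by simp [norm_smul, hx, abs_of_pos hr0])
    simp only [map_neg, map_smul, smul_eq_mul] at h1 h2
    have h3 : |r * ψ (T x)| ≤ u := abs_le.2 ⟨by linarith, h1.le⟩
    rwa [abs_mul, abs_of_pos hr0, mul_comm, ← le_div_iff₀ hr0] at h3
  have hψy : ψ y ≤ ‖y‖ * ∑' i, |a i| := by
    refine le_of_tendsto' (c0_tendsto_sum ψ y) fun N => ?_
    calc ∑ i ∈ Finset.range N, y i * a i ≤ ∑ i ∈ Finset.range N, ‖y‖ * |a i| :=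
          Finset.sum_le_sum fun i _ => (le_abs_self _).trans (by
            rw [abs_mul]; gcongr; exact c0_abs_apply_le y i)
      _ ≤ ‖y‖ * ∑' i, |a i| := by
          rw [← Finset.mul_sum]
          gcongr
          exact hasum.sum_le_tsum _ fun _ _ => abs_nonneg _
  have : ‖y‖ * ∑' i, |a i| ≤ u := by
    have h := hlow.trans hup
    rw [le_div_iff₀ hr0, hr] at h
    calc ‖y‖ * ∑' i, |a i| = δ * (∑' i, |a i|) * (δ⁻¹ * ‖y‖) := by field_simp
      _ ≤ u := h
  linarith

/-- A Banach space mapped onto `c₀` by a bounded operator has a quotient isomorphic to `c₀`. -/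
lemma hasQuotientC0_of_surjective {X : Type*} [NormedAddCommGroup X] [NormedSpace ℝ X]
    [CompleteSpace X] (T : X →L[ℝ] C₀(ℕ, ℝ)) (hT : Function.Surjective T) :
    HasQuotientC0 X := by
  let e : (X ⧸ T.ker) ≃ₗ[ℝ] C₀(ℕ, ℝ) := T.toLinearMap.quotKerEquivOfSurjective hT
  refine ⟨T.ker, T.isClosed_ker, ⟨{ e with continuous_toFun := ?_, continuous_invFun := ?_ }⟩⟩
  · exact (Submodule.isQuotientMap_mkQ _).continuous_iff.2 T.continuous
  · refine (T.isQuotientMap hT).continuous_iff.2 ?_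
    have : e.symm ∘ T = T.ker.mkQ := by
      ext x
      exact e.symm_apply_eq.2 rfl
    change Continuous (e.symm ∘ T)
    rw [this]
    exact continuous_quot_mk

/-- The `n`-th coordinate functional on `c₀`. -/
noncomputable def c0Coord (n : ℕ) : C₀(ℕ, ℝ) →L[ℝ] ℝ :=
  LinearMap.mkContinuous
    { toFun := fun z => z n
      map_add' := fun _ _ => rfl
      map_smul' := fun _ _ => rfl } 1 fun z => by
    rw [one_mul]
    exact c0_abs_apply_le z n

@[simp]
lemma c0Coord_apply (n : ℕ) (z : C₀(ℕ, ℝ)) : c0Coord n z = z n := rfl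

/-- A Grothendieck space has no quotient isomorphic to `c₀`. -/
lemma IsGrothendieck.not_hasQuotientC0 {X : Type*} [NormedAddCommGroup X] [NormedSpace ℝ X]
    [CompleteSpace X] (hX : IsGrothendieck X) : ¬ HasQuotientC0 X := by
  rintro ⟨M, hM, ⟨e⟩⟩
  let T : X →L[ℝ] C₀(ℕ, ℝ) := e.toContinuousLinearMap.comp M.mkQL
  have hT : Function.Surjective T := e.surjective.comp M.mkQ_surjective
  obtain ⟨C, hC, hpre⟩ := T.exists_preimage_norm_le hT
  choose x hx hxC using fun N => hpre (c0Truncate (fun _ => 1) N)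
  have hxC' : ∀ N, ‖x N‖ ≤ C := fun N =>
    (hxC N).trans (mul_le_of_le_one_right hC.le (c0_norm_le zero_le_one fun n => by
      rw [c0Truncate_apply]
      split_ifs <;> simp))
  let A : Set (X →L[ℝ] ℝ) := {g | ∀ᶠ N in atTop, g (x N) = 1}
  have hconv : Convex ℝ A := by
    intro g hg h hh s t _ _ hst
    filter_upwards [hg, hh] with N hgN hhN
    simp [hgN, hhN, hst]
  have hzero : (0 : X →L[ℝ] ℝ) ∉ closure A := by
    intro h0
    obtain ⟨g, hg, hgC⟩ := Metric.mem_closure_iff.1 h0 C⁻¹ (inv_pos.2 hC)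
    rw [dist_zero_left] at hgC
    obtain ⟨N, hN⟩ := hg.exists
    have h1 : (1 : ℝ) ≤ ‖g‖ * C := by
      calc (1 : ℝ) = ‖g (x N)‖ := by simp [hN]
        _ ≤ ‖g‖ * C := g.le_opNorm_of_le (hxC' N)
    have h2 := mul_lt_mul_of_pos_right hgC hC
    rw [inv_mul_cancel₀ hC.ne'] at h2
    linarith
  obtain ⟨Φ, u, hΦ, hu⟩ := geometric_hahn_banach_closed_point hconv.closure isClosed_closure hzero
  have hweak : WeakConv (X →L[ℝ] ℝ) (fun n => (c0Coord n).comp T) 0 :=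
    hX _ _ fun z => c0_tendsto (T z)
  refine absurd (le_of_tendsto' (hweak Φ) fun n => (hΦ _ (subset_closure ?_)).le) (not_le.2 hu)
  filter_upwards [eventually_gt_atTop n] with N hN
  simp [hx, hN]

/-- The dual of a Grothendieck Banach space is weakly sequentially complete. -/
lemma IsGrothendieck.weaklySeqComplete_dual {X : Type*} [NormedAddCommGroup X]
    [NormedSpace ℝ X] [CompleteSpace X] (hX : IsGrothendieck X) :
    WeaklySeqComplete (X →L[ℝ] ℝ) := by
  intro f hf
  choose g hg using fun x => hf (ContinuousLinearMap.apply ℝ ℝ x)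
  exact ⟨continuousLinearMapOfTendsto f (tendsto_pi_nhds.2 hg), hX _ _ hg⟩

/-- A Banach space with weakly sequentially complete dual and no quotient isomorphic to `c₀` is
Grothendieck: otherwise Rosenthal's theorem, applied to a weak* null sequence which is not weakly
null, yields an operator onto `c₀`. -/
lemma WeaklySeqComplete.isGrothendieck {X : Type*} [NormedAddCommGroup X]
    [NormedSpace ℝ X] [CompleteSpace X] (hX : WeaklySeqComplete (X →L[ℝ] ℝ))
    (hc0 : ¬ HasQuotientC0 X) : IsGrothendieck X := by
  suffices hnull : ∀ f, WeakStarConv X f 0 → WeakConv (X →L[ℝ] ℝ) f 0 by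
    intro f g hfg φ
    have h := hnull (fun n => f n - g) (fun x => by simpa using (hfg x).sub_const (g x)) φ
    simpa using h.add_const (φ g)
  intro f hf φ
  by_contra hφ
  obtain ⟨ε, hε, hfreq⟩ : ∃ ε > 0, ∃ᶠ n in atTop, ε ≤ |φ (f n)| := by
    rw [Metric.tendsto_nhds] at hφ
    push Not at hφ
    simpa using hφ
  obtain ⟨κ, hκ, hκε⟩ := extraction_of_frequently_atTop hfreq
  obtain ⟨K, hK⟩ := banach_steinhaus (g := f) fun x => by
    obtain ⟨C, hC⟩ := (hf x).norm.bddAbove_range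
    exact ⟨C, fun n => hC ⟨n, rfl⟩⟩
  obtain ⟨θ, hθ, δ, hδ, hl1⟩ := exists_l1_subsequence (f := f ∘ κ) (fun n => hK (κ n)) (by
    intro θ hθ hcauchy
    obtain ⟨g, hg⟩ := hX _ hcauchy
    have hg0 : g = 0 := by
      ext x
      exact tendsto_nhds_unique (hg (ContinuousLinearMap.apply ℝ ℝ x))
        ((hf x).comp (hκ.comp hθ).tendsto_atTop)
    have hlim := (hg φ).abs
    rw [hg0, map_zero, abs_zero] at hlim
    exact absurd (ge_of_tendsto' hlim fun n => hκε (θ n)) (not_le.2 hε))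
  exact hc0 (hasQuotientC0_of_surjective _ (c0Operator_surjective (f := f ∘ κ ∘ θ)
    (fun n => hK _) (fun x => (hf x).comp (hκ.comp hθ).tendsto_atTop) hδ hl1))

/-- Räbiger: `X` is Grothendieck iff `X*` is weakly sequentially complete and `X` has
no quotient isomorphic to `c₀`. -/
theorem grothendieck_iff_dual_wsc_and_no_c0_quotient (X : Type*)
    [NormedAddCommGroup X] [NormedSpace ℝ X] [CompleteSpace X] :
    IsGrothendieck X ↔ WeaklySeqComplete (X →L[ℝ] ℝ) ∧ ¬ HasQuotientC0 X :=
  ⟨fun h => ⟨h.weaklySeqComplete_dual, h.not_hasQuotientC0⟩, fun h => h.1.isGrothendieck h.2⟩
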